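/- Let U be a consistent c.e. theory and 𝒳 a set of sentences. Then U is strongly effectively 𝒳-inseparable if and only if U is effectively essentially hereditarily 𝒳-creative. -/

import Mathlib

open FirstOrder FirstOrder.Language

namespace PourEl

/-! ## Recursion-theoretic notions -/

/-- The `i`-th computably enumerable subset of `ℕ` (the domain of the `i`-th
partial computable function). -/
def WSet (i : ℕ) : Set ℕ :=
  {n | ((Denumerable.ofNat Nat.Partrec.Code i).eval n).Dom}

/-- A set of natural numbers is computably enumerable. -/
def CE (A : Set ℕ) : Prop := ∃ i, A = WSet i

/-- A set of natural numbers is computable. -/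
def Comp (A : Set ℕ) : Prop := ComputablePred (· ∈ A)

/-- Disjoint sets `X`, `Y` are computably separable iff some computable set
contains `X` and is disjoint from `Y`. -/
def CompSeparable (X Y : Set ℕ) : Prop :=
  ∃ Z : Set ℕ, Comp Z ∧ X ⊆ Z ∧ Y ∩ Z = ∅

/-- Computable inseparability. -/
def CompInseparable (X Y : Set ℕ) : Prop := ¬ CompSeparable X Y

/-- `Z` and `W` weakly biseparate `X` and `Y`. -/
def WeaklyBiseparate {α : Type*} (Z W X Y : Set α) : Prop :=
  X ⊆ Z ∧ Y ⊆ W ∧ Z ∩ Y = ∅ ∧ W ∩ X = ∅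

/-- `Z` and `W` biseparate `X` and `Y`. -/
def Biseparate {α : Type*} (Z W X Y : Set α) : Prop :=
  WeaklyBiseparate Z W X Y ∧ Z ∩ W = ∅

/-! ## Logical notions -/

variable {L : FirstOrder.Language}

/-- Provability: `φ` is a first-order consequence of `U` (by Gödel completeness,
semantic consequence). -/
def Prv (U : L.Theory) (φ : L.Sentence) : Prop := U ⊨ᵇ φ

/-- `U_p`: the set of theorems of `U`. -/
def Thms (U : L.Theory) : Set L.Sentence := {φ | Prv U φ}

/-- `U_r`: the set of refutable sentences of `U`. -/
def Refut (U : L.Theory) : Set L.Sentence := {φ | Prv U ∼φ}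

/-- Consistency: `U ⊬ ⊥`. -/
def Consistent (U : L.Theory) : Prop := ¬ Prv U ⊥

/-- `φ` is independent of `U`: `U` proves neither `φ` nor `¬φ`. -/
def Independent (U : L.Theory) (φ : L.Sentence) : Prop := ¬ Prv U φ ∧ ¬ Prv U ∼φ

/-- `U` is incomplete: some sentence is independent of it. -/
def Incomplete (U : L.Theory) : Prop := ∃ φ, Independent U φ

/-- Mono-consequence: `U ⊢_m φ` iff `ψ ⊢ φ` for some `ψ ∈ U`. -/
def MPrv (U : L.Theory) (φ : L.Sentence) : Prop := ∃ ψ ∈ U, Prv {ψ} φ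

/-- `U_m`: the set of mono-theorems of `U`. -/
def MThms (U : L.Theory) : Set L.Sentence := {φ | MPrv U φ}

/-- `U_n`: the set of mono-refutable sentences of `U`. -/
def MRefut (U : L.Theory) : Set L.Sentence := {φ | MPrv U ∼φ}

/-- Mono-consistency: every member is consistent by itself. -/
def MonoConsistent (U : L.Theory) : Prop := ∀ ψ ∈ U, Consistent ({ψ} : L.Theory)

/-- `Û`: the set of all non-empty finite conjunctions of elements of `U`. -/
def hat (U : L.Theory) : L.Theory :=
  {φ | ∃ (ψ : L.Sentence) (l : List L.Sentence),
    ψ ∈ U ∧ (∀ χ ∈ l, χ ∈ U) ∧ φ = l.foldl (· ⊓ ·) ψ}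

/-- `U ⋓ V`. -/
def Cup (U V : L.Theory) : L.Theory :=
  {χ | ∃ φ ∈ U, ∃ ψ ∈ V, χ = φ ⊓ ψ}

/-- `U ⋐ V`: for every `φ ∈ U` and `ψ ∈ V` there is `ρ ∈ V` with `ρ ⊢ φ ∧ ψ`. -/
def Ssub (U V : L.Theory) : Prop :=
  ∀ φ ∈ U, ∀ ψ ∈ V, ∃ ρ ∈ V, Prv {ρ} (φ ⊓ ψ)

/-! ## Gödel numbering -/

/-- A Gödel numbering of the sentences of a (countable) signature: a bijective
coding of sentences by natural numbers that is effective for the basic syntactic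
operations, and for which the theorems of a c.e. theory can be effectively
enumerated from an index of the theory. -/
structure Numbering (L : FirstOrder.Language) where
  equiv : L.Sentence ≃ ℕ
  neg_comp : Computable fun n => equiv ∼(equiv.symm n)
  inf_comp : Computable₂ fun m n => equiv (equiv.symm m ⊓ equiv.symm n)
  imp_comp : Computable₂ fun m n => equiv (equiv.symm m ⟹ equiv.symm n)
  iff_comp : Computable₂ fun m n => equiv (equiv.symm m ⇔ equiv.symm n)
  thmIdx : ℕ → ℕ
  thmIdx_comp : Computable thmIdx
  thmIdx_spec : ∀ i, WSet (thmIdx i) = equiv '' Thms (equiv.symm '' WSet i)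

namespace Numbering

variable (g : Numbering L)

/-- The code of a sentence. -/
def code (φ : L.Sentence) : ℕ := g.equiv φ

/-- The set of codes of a set of sentences. -/
def codes (S : Set L.Sentence) : Set ℕ := g.equiv '' S

/-- The theory axiomatised by the `i`-th c.e. set (identified with a set of
sentences via the numbering). -/
def thy (i : ℕ) : L.Theory := g.equiv.symm '' WSet i

/-- The theory `U` is computably enumerable (with respect to the numbering). -/
def CEThy (U : L.Theory) : Prop := CE (g.codes U)

end Numbering


/-- `U` is effectively essentially hereditarily `X`-creative. -/
def EffEssHerXCreative (g : Numbering L) (U : L.Theory) (X : Set L.Sentence) : Prop :=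
  ∃ Φ : ℕ × ℕ × ℕ →. ℕ, Partrec Φ ∧ ∀ i j k,
    Thms U ⊆ Thms (g.thy k) → Consistent (g.thy k) →
    Thms (g.thy i) ⊆ Thms (g.thy k) →
    g.codes (Thms (g.thy i)) ∩ WSet j = ∅ →
    ∃ n ∈ Φ (i, j, k), n ∈ g.codes X ∧ n ∉ g.codes (Thms (g.thy i)) ∪ WSet j

/-- `U` is strongly effectively `X`-inseparable: effective inseparability of the
pair consisting of the theorems of pure predicate logic (`0_{U,p}`) and the
refutable sentences of `U`. -/
def StrongEffXInseparable (g : Numbering L) (U : L.Theory) (X : Set L.Sentence) : Prop :=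
  ∃ Φ : ℕ → ℕ →. ℕ, Partrec₂ Φ ∧ ∀ i j,
    WeaklyBiseparate (WSet i) (WSet j)
      (g.codes (Thms (∅ : L.Theory))) (g.codes (Refut U)) →
    ∃ n ∈ Φ i j, n ∈ g.codes X ∧ n ∉ WSet i ∪ WSet j

/-!
From inseparability to creativity: if `W_i` is a subtheory of a consistent extension of `U` and its
theorems avoid `W_j`, then the theorems of `W_i` together with `W_j ∪ U_r` weakly biseparate
`0_{U,p}` and `U_r`, and all the indices involved are computable.

From creativity to inseparability: let `W_i`, `W_j` weakly biseparate `0_{U,p}` and `U_r`. The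
double recursion theorem yields indices `a`, `b` that know the value `n` which the creative function
produces on `a`, `b` and an index of `W_a ∪ U`. If `n` appears in `W_i` before it appears in `W_j`,
put `W_a = {n}` and `W_b = ∅`; if it appears in `W_j` first, put `W_a = ∅` and `W_b = {n}`;
otherwise leave both empty. In every case `W_a ∪ U` is consistent (as `W_i` contains no refutable
sentence) and the theorems of `W_a` avoid `W_b` (as `W_j` contains no logical validity). So the
creative function does produce some `n`, and it lies outside the theorems of `W_a` and outside
`W_b`, which excludes the first two cases: `n ∉ W_i ∪ W_j`.
-/

/-! ## Computably enumerable sets -/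

section REPred

variable {α β σ : Type*} [Primcodable α] [Primcodable β] [Primcodable σ]

theorem rePred_comp {p : β → Prop} (hp : REPred p) {f : α → β} (hf : Computable f) :
    REPred fun a => p (f a) :=
  Partrec.comp hp hf

theorem rePred_exists_mem {f : α →. σ} (hf : Partrec f) {p : α × σ → Prop} (hp : REPred p) :
    REPred fun a => ∃ y ∈ f a, p (a, y) :=
  (hf.bind (Partrec.to₂ hp)).dom_re.of_eq fun a => by
    simp [Part.dom_iff_mem, Part.mem_assert_iff]

theorem rePred_and {p q : α → Prop} (hp : REPred p) (hq : REPred q) :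
    REPred fun a => p a ∧ q a :=
  (rePred_exists_mem hp (rePred_comp hq Computable.fst)).of_eq fun a => by
    simp [Part.mem_assert_iff]

theorem rePred_or {p q : α → Prop} (hp : REPred p) (hq : REPred q) :
    REPred fun a => p a ∨ q a := by
  obtain ⟨k, hk, hk_dom⟩ := Partrec.merge' hp hq
  exact hk.dom_re.of_eq fun a => by simp [(hk_dom a).2, Part.assert]

theorem rePred_eq : REPred fun q : α × α => q.1 = q.2 := by
  classical
  exact Primrec.eq.computablePred.to_re

theorem rePred_mem {f : α →. σ} (hf : Partrec f) : REPred fun q : α × σ => q.2 ∈ f q.1 :=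
  (rePred_exists_mem (hf.comp Computable.fst)
    (rePred_comp rePred_eq
      (Computable.pair Computable.snd (Computable.snd.comp Computable.fst)))).of_eq fun q => by
    simp

end REPred

/-- `A` and `B` reduce `C` and `D` in the sense of the reduction principle: they are disjoint
subsets of `C` and `D` respectively, with the same union as `C` and `D`. -/
structure Reduces {α : Type*} (A B C D : Set α) : Prop where
  subset_left : A ⊆ C
  subset_right : B ⊆ D
  disjoint : Disjoint A B
  union_eq : A ∪ B = C ∪ D

theorem Reduces.preimage {α β : Type*} {A B C D : Set β} (h : Reduces A B C D) (f : α → β) :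
    Reduces (f ⁻¹' A) (f ⁻¹' B) (f ⁻¹' C) (f ⁻¹' D) where
  subset_left := Set.preimage_mono h.subset_left
  subset_right := Set.preimage_mono h.subset_right
  disjoint := h.disjoint.preimage f
  union_eq := by rw [← Set.preimage_union, h.union_eq, Set.preimage_union]

theorem exists_reduces_of_rePred {α : Type*} [Primcodable α] {C D : Set α}
    (hC : REPred (· ∈ C)) (hD : REPred (· ∈ D)) :
    ∃ A B : Set α, REPred (· ∈ A) ∧ REPred (· ∈ B) ∧ Reduces A B C D := by
  -- Dovetailing the two searches records which of `C` and `D` a point enters first.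
  obtain ⟨first, hfirst, hmerge⟩ := Partrec.merge'
    (hC.map (Computable.const true).to₂) (hD.map (Computable.const false).to₂)
  have hdom (x : α) : (first x).Dom ↔ x ∈ C ∨ x ∈ D := by
    simpa [Part.assert] using (hmerge x).2
  have re_first (c : Bool) : REPred fun x => c ∈ first x :=
    rePred_comp (rePred_mem hfirst) (Computable.pair Computable.id (Computable.const c))
  have hA (x : α) (h : true ∈ first x) : x ∈ C := by
    simpa [Part.mem_assert_iff] using (hmerge x).1 true h
  have hB (x : α) (h : false ∈ first x) : x ∈ D := by
    simpa [Part.mem_assert_iff] using (hmerge x).1 false h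
  refine ⟨{x | true ∈ first x}, {x | false ∈ first x}, re_first true, re_first false, hA, hB,
    Set.disjoint_left.2 fun x ht hf => Bool.noConfusion (Part.mem_unique ht hf), ?_⟩
  ext x
  change true ∈ first x ∨ false ∈ first x ↔ x ∈ C ∨ x ∈ D
  rw [← hdom, Part.dom_iff_mem, Bool.exists_bool, or_comm]

section Indices

open Nat.Partrec (Code)

variable {α : Type*} [Primcodable α]

theorem rePred_mem_WSet : REPred fun q : ℕ × ℕ => q.2 ∈ WSet q.1 :=
  (Code.eval_part.comp ((Computable.ofNat Code).comp Computable.fst) Computable.snd).dom_re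

theorem exists_computable_index {R : α → ℕ → Prop} (hR : REPred fun q : α × ℕ => R q.1 q.2) :
    ∃ s : α → ℕ, Computable s ∧ ∀ a, WSet (s a) = {x | R a x} := by
  obtain ⟨c, hc⟩ := Code.exists_code.1 hR
  refine ⟨fun a => Encodable.encode (c.curry (Encodable.encode a)),
    Computable.encode.comp
      (Code.primrec₂_curry.to_comp.comp (Computable.const c) Computable.encode), fun a => ?_⟩
  ext x
  simp [WSet, Code.eval_curry, hc, Part.assert]

theorem ce_of_rePred {A : Set ℕ} (hA : REPred (· ∈ A)) : CE A := by
  obtain ⟨s, -, hs⟩ :=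
    exists_computable_index (α := Unit) (R := fun _ => (· ∈ A)) (rePred_comp hA Computable.snd)
  exact ⟨s (), (hs ()).symm⟩

theorem CE.rePred {A : Set ℕ} (hA : CE A) : REPred (· ∈ A) := by
  obtain ⟨i, rfl⟩ := hA
  exact rePred_comp rePred_mem_WSet (Computable.pair (Computable.const i) Computable.id)

theorem CE.exists_union_index {A : Set ℕ} (hA : CE A) :
    ∃ s : ℕ → ℕ, Computable s ∧ ∀ e, WSet (s e) = WSet e ∪ A :=
  exists_computable_index (rePred_or rePred_mem_WSet (rePred_comp hA.rePred Computable.snd))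

theorem double_recursion {R S : α → ℕ × ℕ → ℕ → Prop}
    (hR : REPred fun q : α × (ℕ × ℕ) × ℕ => R q.1 q.2.1 q.2.2)
    (hS : REPred fun q : α × (ℕ × ℕ) × ℕ => S q.1 q.2.1 q.2.2) :
    ∃ a b : α → ℕ, Computable a ∧ Computable b ∧ ∀ p,
      WSet (a p) = {x | R p (a p, b p) x} ∧ WSet (b p) = {x | S p (a p, b p) x} := by
  -- The program `c` is run on its own code to produce the pair of indices.
  let selfApply (q : α × Code) : Part ℕ := q.2.eval (Encodable.encode q)
  have hself : Partrec selfApply := Code.eval_part.comp Computable.snd Computable.encode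
  have index {T : α → ℕ × ℕ → ℕ → Prop}
      (hT : REPred fun q : α × (ℕ × ℕ) × ℕ => T q.1 q.2.1 q.2.2) :
      ∃ s : α × Code → ℕ, Computable s ∧
        ∀ q, WSet (s q) = {x | ∃ w ∈ selfApply q, T q.1 w.unpair x} :=
    exists_computable_index <| rePred_exists_mem (hself.comp Computable.fst) <| rePred_comp hT <|
      Computable.pair (Computable.fst.comp (Computable.fst.comp Computable.fst)) <|
        Computable.pair (Computable.unpair.comp Computable.snd)
          (Computable.snd.comp Computable.fst)
  obtain ⟨a, ha, haW⟩ := index hR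
  obtain ⟨b, hb, hbW⟩ := index hS
  obtain ⟨c, hc⟩ := Code.exists_code.1 (Computable.pair ha hb)
  have hc_self (p : α) : selfApply (p, c) = Part.some (Nat.pair (a (p, c)) (b (p, c))) := by
    simp [selfApply, hc]
  have hpc : Computable fun p : α => (p, c) := Computable.pair Computable.id (Computable.const c)
  exact ⟨fun p => a (p, c), fun p => b (p, c), ha.comp hpc, hb.comp hpc, fun p => by
    simp [haW, hbW, hc_self]⟩

theorem exists_reduces_fixedPoint {C D : Set (α × (ℕ × ℕ) × ℕ)}
    (hC : REPred (· ∈ C)) (hD : REPred (· ∈ D)) :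
    ∃ a b : α → ℕ, Computable a ∧ Computable b ∧ ∀ p,
      Reduces (WSet (a p)) (WSet (b p))
        {x | (p, (a p, b p), x) ∈ C} {x | (p, (a p, b p), x) ∈ D} := by
  obtain ⟨A, B, hA, hB, hred⟩ := exists_reduces_of_rePred hC hD
  obtain ⟨a, b, ha, hb, hW⟩ := double_recursion (R := fun p w x => (p, w, x) ∈ A)
    (S := fun p w x => (p, w, x) ∈ B) hA hB
  refine ⟨a, b, ha, hb, fun p => ?_⟩
  rw [(hW p).1, (hW p).2]
  exact hred.preimage fun x => (p, (a p, b p), x)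

theorem exists_reduces_inter_value {F : ℕ × ℕ →. ℕ} (hF : Partrec F) :
    ∃ a b : ℕ × ℕ → ℕ, Computable a ∧ Computable b ∧ ∀ i j,
      Reduces (WSet (a (i, j))) (WSet (b (i, j)))
        (WSet i ∩ {n | n ∈ F (a (i, j), b (i, j))})
        (WSet j ∩ {n | n ∈ F (a (i, j), b (i, j))}) := by
  have re_value : REPred fun q : (ℕ × ℕ) × (ℕ × ℕ) × ℕ => q.2.2 ∈ F q.2.1 :=
    rePred_comp (rePred_mem hF) Computable.snd
  have re_inter {index : ℕ × ℕ → ℕ} (hindex : Computable index) :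
      REPred (· ∈ {q : (ℕ × ℕ) × (ℕ × ℕ) × ℕ | q.2.2 ∈ WSet (index q.1) ∧ q.2.2 ∈ F q.2.1}) :=
    rePred_and
      (rePred_comp rePred_mem_WSet
        (Computable.pair (hindex.comp Computable.fst) (Computable.snd.comp Computable.snd)))
      re_value
  obtain ⟨a, b, ha, hb, hred⟩ :=
    exists_reduces_fixedPoint (re_inter Computable.fst) (re_inter Computable.snd)
  exact ⟨a, b, ha, hb, fun i j => hred (i, j)⟩

end Indices

/-! ## Theories and their indices -/

section Provability

variable {S T : L.Theory}

theorem subset_thms (T : L.Theory) : T ⊆ Thms T := fun _ => Theory.models_sentence_of_mem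

theorem thms_subset_thms (h : S ⊆ Thms T) : Thms S ⊆ Thms T :=
  fun _ => Theory.models_of_models_theory h

theorem thms_mono (h : S ⊆ T) : Thms S ⊆ Thms T := thms_subset_thms (h.trans (subset_thms T))

theorem refut_mono (h : Thms S ⊆ Thms T) : Refut S ⊆ Refut T := fun φ hφ => h (a := ∼φ) hφ

theorem Consistent.disjoint_thms_refut (hT : Consistent T) : Disjoint (Thms T) (Refut T) :=
  Set.disjoint_left.2 fun φ (hφ : Prv T φ) (hnφ : Prv T ∼φ) => hT <|
    Theory.models_sentence_iff.2 fun M =>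
      absurd (hφ.realize_sentence M) ((Sentence.realize_not M).1 (hnφ.realize_sentence M))

theorem consistent_insert {φ : L.Sentence} (h : φ ∉ Refut T) : Consistent (insert φ T) :=
  fun hbot => h <| Theory.models_sentence_iff.2 fun M => (Sentence.realize_not M).2 fun hφ => by
    have : M ⊨ (insert φ T : L.Theory) := ⟨by
      rintro ψ (rfl | hψ)
      exacts [hφ, Theory.realize_sentence_of_mem T hψ]⟩
    exact Theory.models_sentence_iff.1 hbot (Theory.ModelType.of (insert φ T) M)

theorem Consistent.union_of_subsingleton (hT : Consistent T) (hS : S.Subsingleton)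
    (hST : Disjoint S (Refut T)) : Consistent (S ∪ T) := by
  obtain rfl | ⟨φ, rfl⟩ := hS.eq_empty_or_singleton
  · rwa [Set.empty_union]
  · exact consistent_insert (Set.disjoint_singleton_left.1 hST)

end Provability

namespace Numbering

variable (g : Numbering L)

theorem codes_thy (i : ℕ) : g.codes (g.thy i) = WSet i := g.equiv.image_symm_image (WSet i)

theorem codes_injective : Function.Injective g.codes := g.equiv.injective.image_injective

theorem codes_mono {S T : L.Theory} (h : S ⊆ T) : g.codes S ⊆ g.codes T := Set.image_mono h

theorem codes_union (S T : L.Theory) : g.codes (S ∪ T) = g.codes S ∪ g.codes T :=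
  Set.image_union g.equiv S T

theorem disjoint_codes {S T : L.Theory} : Disjoint (g.codes S) (g.codes T) ↔ Disjoint S T :=
  Set.disjoint_image_iff g.equiv.injective

variable {g} {U : L.Theory}

theorem CEThy.exists_thy_eq (hU : g.CEThy U) : ∃ u, g.thy u = U := by
  obtain ⟨u, hu⟩ := hU
  exact ⟨u, g.codes_injective ((g.codes_thy u).trans hu.symm)⟩

theorem CEThy.ce_codes_refut (hU : g.CEThy U) : CE (g.codes (Refut U)) := by
  obtain ⟨u, rfl⟩ := hU.exists_thy_eq
  have hthms : CE (g.codes (Thms (g.thy u))) := ⟨g.thmIdx u, (g.thmIdx_spec u).symm⟩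
  refine ce_of_rePred ((rePred_comp hthms.rePred g.neg_comp).of_eq fun n => ?_)
  simp [codes, Refut, Thms, Equiv.image_eq_preimage_symm]

theorem CEThy.exists_union_index (hU : g.CEThy U) :
    ∃ s : ℕ → ℕ, Computable s ∧ ∀ e, g.thy (s e) = g.thy e ∪ U := by
  obtain ⟨s, hs, hsW⟩ := CE.exists_union_index hU
  refine ⟨s, hs, fun e => g.codes_injective ?_⟩
  rw [codes_union, codes_thy, codes_thy, hsW]

end Numbering

/-! ## Inseparability and creativity -/

section Equivalence

variable {g : Numbering L} {U : L.Theory} {X : Set L.Sentence}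

theorem weaklyBiseparate_thms_union_refut {S V : L.Theory} {A : Set ℕ} (hV : Consistent V)
    (hUV : Thms U ⊆ Thms V) (hSV : Thms S ⊆ Thms V) (hSA : Disjoint (g.codes (Thms S)) A) :
    WeaklyBiseparate (g.codes (Thms S)) (A ∪ g.codes (Refut U))
      (g.codes (Thms (∅ : L.Theory))) (g.codes (Refut U)) := by
  have hempty : g.codes (Thms (∅ : L.Theory)) ⊆ g.codes (Thms S) :=
    g.codes_mono (thms_mono (Set.empty_subset S))
  have hrefut : Disjoint (g.codes (Thms S)) (g.codes (Refut U)) :=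
    g.disjoint_codes.2 (hV.disjoint_thms_refut.mono hSV (refut_mono hUV))
  exact ⟨hempty, Set.subset_union_right, hrefut.inter_eq,
    ((hSA.union_right hrefut).mono_left hempty).symm.inter_eq⟩

theorem StrongEffXInseparable.effEssHerXCreative (hU : g.CEThy U)
    (h : StrongEffXInseparable g U X) : EffEssHerXCreative g U X := by
  obtain ⟨Φ, hΦ, hspec⟩ := h
  obtain ⟨s, hs, hsW⟩ := hU.ce_codes_refut.exists_union_index
  refine ⟨fun q => Φ (g.thmIdx q.1) (s q.2.1),
    hΦ.comp (g.thmIdx_comp.comp Computable.fst) (hs.comp (Computable.fst.comp Computable.snd)),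
    fun i j k hUk hk hik hij => ?_⟩
  have hthm : WSet (g.thmIdx i) = g.codes (Thms (g.thy i)) := g.thmIdx_spec i
  have hsep := weaklyBiseparate_thms_union_refut hk hUk hik (Set.disjoint_iff_inter_eq_empty.2 hij)
  rw [← hthm, ← hsW j] at hsep
  obtain ⟨n, hn, hnX, hn_notMem⟩ := hspec _ _ hsep
  rw [hthm, hsW, ← Set.union_assoc] at hn_notMem
  exact ⟨n, hn, hnX, fun h => hn_notMem (Or.inl h)⟩

theorem consistent_union_of_codes_subset {S : L.Theory} {Z N : Set ℕ} (hU : Consistent U)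
    (hZ : Disjoint Z (g.codes (Refut U))) (hN : N.Subsingleton) (hS : g.codes S ⊆ Z ∩ N) :
    Consistent (S ∪ U) := by
  have hS_subsingleton : S.Subsingleton := Set.subsingleton_of_image g.equiv.injective S
    (hN.anti (hS.trans Set.inter_subset_right))
  exact hU.union_of_subsingleton hS_subsingleton
    (g.disjoint_codes.1 (hZ.mono_left (hS.trans Set.inter_subset_left)))

theorem disjoint_thms_of_reduces {S : L.Theory} {Z W B N : Set ℕ}
    (hW : Disjoint W (g.codes (Thms (∅ : L.Theory)))) (hN : N.Subsingleton)
    (hred : Reduces (g.codes S) B (Z ∩ N) (W ∩ N)) : Disjoint (g.codes (Thms S)) B := by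
  refine Set.disjoint_left.2 fun n hnS hnB => ?_
  obtain ⟨hnW, hnN⟩ := hred.subset_right hnB
  have hcodes_empty : g.codes S = ∅ := Set.eq_empty_of_forall_notMem fun m hm =>
    Set.disjoint_left.1 hred.disjoint hm (hN (hred.subset_left hm).2 hnN ▸ hnB)
  have hS_empty : S = ∅ := Set.image_eq_empty.1 hcodes_empty
  exact Set.disjoint_left.1 hW hnW (hS_empty ▸ hnS)

theorem EffEssHerXCreative.strongEffXInseparable (hU : g.CEThy U) (hcon : Consistent U)
    (h : EffEssHerXCreative g U X) : StrongEffXInseparable g U X := by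
  obtain ⟨Φ, hΦ, hspec⟩ := h
  obtain ⟨s, hs, hs_thy⟩ := hU.exists_union_index
  let F (w : ℕ × ℕ) : Part ℕ := Φ (w.1, w.2, s w.1)
  have hF : Partrec F := hΦ.comp
    (Computable.pair Computable.fst (Computable.pair Computable.snd (hs.comp Computable.fst)))
  obtain ⟨a, b, ha, hb, hred⟩ := exists_reduces_inter_value hF
  refine ⟨fun i j => F (a (i, j), b (i, j)), hF.comp (Computable.pair ha hb),
    fun i j ⟨_, _, hZ, hW⟩ => ?_⟩
  have hvalue : {n | n ∈ F (a (i, j), b (i, j))}.Subsingleton :=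
    fun m hm n hn => Part.mem_unique hm hn
  have hred := hred i j
  rw [← g.codes_thy (a (i, j))] at hred
  have hcons := consistent_union_of_codes_subset hcon (Set.disjoint_iff_inter_eq_empty.2 hZ) hvalue
    hred.subset_left
  have hdisj := disjoint_thms_of_reduces (Set.disjoint_iff_inter_eq_empty.2 hW) hvalue hred
  rw [← hs_thy] at hcons
  have hsub : g.thy (a (i, j)) ∪ U ⊆ g.thy (s (a (i, j))) := (hs_thy _).superset
  obtain ⟨n, hn, hnX, hn_notMem⟩ := hspec (a (i, j)) (b (i, j)) (s (a (i, j)))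
    (thms_mono (Set.subset_union_right.trans hsub)) hcons
    (thms_mono (Set.subset_union_left.trans hsub)) hdisj.inter_eq
  refine ⟨n, hn, hnX, fun hnW => hn_notMem ?_⟩
  have hn_union : n ∈ g.codes (g.thy (a (i, j))) ∪ WSet (b (i, j)) := by
    rw [hred.union_eq, ← Set.union_inter_distrib_right]
    exact ⟨hnW, hn⟩
  exact hn_union.imp_left fun hn_left => g.codes_mono (subset_thms _) hn_left

end Equivalence

/-- A consistent c.e. theory `U` is strongly effectively
`X`-inseparable iff it is effectively essentially hereditarily `X`-creative. -/
theorem statement16 {L : FirstOrder.Language} (g : Numbering L) (U : L.Theory)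
    (hU : g.CEThy U) (hcon : Consistent U) (X : Set L.Sentence) :
    StrongEffXInseparable g U X ↔ EffEssHerXCreative g U X :=
  ⟨fun h => h.effEssHerXCreative hU, fun h => h.strongEffXInseparable hU hcon⟩

end PourEl
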